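/- arXiv:2402.03015 — 4 statements merged into one kernel-verified Lean document; each statement's English description precedes it below -/
import Mathlib

section
/- Let G be a finite simple graph with no open twins that is the disjoint union of a graph G' and one isolated vertex, where G' has no open twins and no isolated vertices. Then γ^OD(G) = γ^OTD(G') + 1. -/
/-!
The isolated vertex `⋆` has an empty open neighborhood. Hence a dominating set of
`G = G' ⊕ {⋆}` must contain `⋆`, and open-separating a vertex `v` of `G'` from `⋆` means exactly
that `N(v)` meets the code. So open-separation in `G` upgrades domination to total domination
on `G'`: the OD-codes of `G` are the sets `C ∪ {⋆}` with `C` an OTD-code of `G'`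
(`isODCode_sum_bot_iff`), and the minimum cardinalities differ by one. The whole
vertex set of `G'` is an OTD-code, so both minima are over nonempty families.
-/

/-- A set `C` is dominating: every closed neighborhood meets `C`. -/
def Dominating {V : Type*} (G : SimpleGraph V) (C : Set V) : Prop :=
  ∀ v : V, (insert v (G.neighborSet v) ∩ C).Nonempty

/-- A set `C` is total-dominating: every open neighborhood meets `C`. -/
def TotalDominating {V : Type*} (G : SimpleGraph V) (C : Set V) : Prop :=
  ∀ v : V, (G.neighborSet v ∩ C).Nonempty

/-- A set `C` is open-separating: open neighborhoods have pairwise distinct traces on `C`. -/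
def OpenSeparating {V : Type*} (G : SimpleGraph V) (C : Set V) : Prop :=
  ∀ u v : V, u ≠ v → G.neighborSet u ∩ C ≠ G.neighborSet v ∩ C

/-- A set `C` is locating: traces of open neighborhoods on `C` are distinct outside `C`. -/
def Locating {V : Type*} (G : SimpleGraph V) (C : Set V) : Prop :=
  ∀ u ∈ Cᶜ, ∀ v ∈ Cᶜ, u ≠ v → G.neighborSet u ∩ C ≠ G.neighborSet v ∩ C

/-- An OD-code: dominating and open-separating. -/
def IsODCode {V : Type*} (G : SimpleGraph V) (C : Set V) : Prop :=
  Dominating G C ∧ OpenSeparating G C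

/-- An OTD-code: total-dominating and open-separating. -/
def IsOTDCode {V : Type*} (G : SimpleGraph V) (C : Set V) : Prop :=
  TotalDominating G C ∧ OpenSeparating G C

/-- An LD-code: dominating and locating. -/
def IsLDCode {V : Type*} (G : SimpleGraph V) (C : Set V) : Prop :=
  Dominating G C ∧ Locating G C

/-- An LTD-code: total-dominating and locating. -/
def IsLTDCode {V : Type*} (G : SimpleGraph V) (C : Set V) : Prop :=
  TotalDominating G C ∧ Locating G C

/-- The OD-number: minimum cardinality of an OD-code. -/
noncomputable def gammaOD {V : Type*} (G : SimpleGraph V) : ℕ :=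
  sInf {n | ∃ C : Set V, IsODCode G C ∧ C.ncard = n}

/-- The OTD-number: minimum cardinality of an OTD-code. -/
noncomputable def gammaOTD {V : Type*} (G : SimpleGraph V) : ℕ :=
  sInf {n | ∃ C : Set V, IsOTDCode G C ∧ C.ncard = n}

/-- The LD-number: minimum cardinality of an LD-code. -/
noncomputable def gammaLD {V : Type*} (G : SimpleGraph V) : ℕ :=
  sInf {n | ∃ C : Set V, IsLDCode G C ∧ C.ncard = n}

/-- The LTD-number: minimum cardinality of an LTD-code. -/
noncomputable def gammaLTD {V : Type*} (G : SimpleGraph V) : ℕ :=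
  sInf {n | ∃ C : Set V, IsLTDCode G C ∧ C.ncard = n}

/-- `G` has open twins: two distinct vertices with equal open neighborhoods. -/
def HasOpenTwins {V : Type*} (G : SimpleGraph V) : Prop :=
  ∃ u v : V, u ≠ v ∧ G.neighborSet u = G.neighborSet v

/-- The trace on `C` of the neighborhood of a vertex of `G'` lies within the `G'` summand. -/
lemma neighborSet_inl_inter {V W : Type*} (G' : SimpleGraph V) (H : SimpleGraph W)
    (C : Set (V ⊕ W)) (v : V) :
    (G' ⊕g H).neighborSet (Sum.inl v) ∩ C
      = Sum.inl '' (G'.neighborSet v ∩ Sum.inl ⁻¹' C) := by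
  ext x
  rcases x with x | x <;> simp

lemma neighborSet_inr_bot {V W : Type*} (G' : SimpleGraph V) (w : W) :
    (G' ⊕g (⊥ : SimpleGraph W)).neighborSet (Sum.inr w) = ∅ := by
  ext x
  rcases x with x | x <;> simp

lemma isODCode_sum_bot_iff {V : Type*} (G' : SimpleGraph V) (C : Set (V ⊕ PUnit)) :
    IsODCode (G' ⊕g (⊥ : SimpleGraph PUnit)) C ↔
      Sum.inr PUnit.unit ∈ C ∧ IsOTDCode G' (Sum.inl ⁻¹' C) := by
  constructor
  · rintro ⟨hd, hs⟩
    refine ⟨?_, ?_, ?_⟩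
    · obtain ⟨x, hx, hxC⟩ := hd (Sum.inr PUnit.unit)
      rw [neighborSet_inr_bot] at hx
      rcases hx with rfl | hx
      · exact hxC
      · exact absurd hx (Set.notMem_empty x)
    · intro v
      -- `v` is separated from the isolated vertex, whose trace on `C` is empty.
      have h := hs (Sum.inl v) (Sum.inr PUnit.unit) (by simp)
      rw [neighborSet_inl_inter, neighborSet_inr_bot, Set.empty_inter] at h
      exact Set.image_nonempty.mp (Set.nonempty_iff_ne_empty.mpr h)
    · intro u v huv heq
      refine hs (Sum.inl u) (Sum.inl v) (by simpa using huv) ?_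
      rw [neighborSet_inl_inter, neighborSet_inl_inter, heq]
  · rintro ⟨hC, ht, hs⟩
    refine ⟨?_, ?_⟩
    · rintro (v | ⟨⟩)
      · obtain ⟨x, hx, hxC⟩ := ht v
        exact ⟨Sum.inl x, Or.inr (by simpa using hx), hxC⟩
      · exact ⟨_, Or.inl rfl, hC⟩
    · rintro (u | ⟨⟩) (v | ⟨⟩) huv heq
      · rw [neighborSet_inl_inter, neighborSet_inl_inter] at heq
        exact hs u v (fun h => huv (h ▸ rfl)) (Set.image_injective.mpr Sum.inl_injective heq)
      · rw [neighborSet_inl_inter, neighborSet_inr_bot, Set.empty_inter, Set.image_eq_empty] at heq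
        exact (ht u).ne_empty heq
      · rw [neighborSet_inl_inter, neighborSet_inr_bot, Set.empty_inter] at heq
        exact (ht v).ne_empty (Set.image_eq_empty.mp heq.symm)
      · exact huv rfl

lemma ncard_insert_inr_image_inl {V : Type*} [Finite V] (C : Set V) :
    (insert (Sum.inr PUnit.unit) (Sum.inl '' C) : Set (V ⊕ PUnit)).ncard = C.ncard + 1 := by
  rw [Set.ncard_insert_of_notMem (by simp) (Set.toFinite _),
    Set.ncard_image_of_injective _ Sum.inl_injective]

/-- If `G` is the disjoint union of a graph `G'` (open twin-free, without
isolated vertices) and one isolated vertex, and `G` is open twin-free,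
then `γ^OD(G) = γ^OTD(G') + 1`. -/
theorem gammaOD_union_isolated {V : Type*} [Fintype V] (G' : SimpleGraph V)
    (htwins' : ¬ HasOpenTwins G')
    (hiso' : ∀ v : V, (G'.neighborSet v).Nonempty)
    (htwins : ¬ HasOpenTwins (G' ⊕g (⊥ : SimpleGraph PUnit))) :
    gammaOD (G' ⊕g (⊥ : SimpleGraph PUnit)) = gammaOTD G' + 1 := by
  have huniv : IsOTDCode G' Set.univ := by
    refine ⟨fun v => by simpa using hiso' v, fun u v huv heq => htwins' ⟨u, v, huv, ?_⟩⟩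
    simpa using heq
  apply le_antisymm
  · obtain ⟨C, hC, hcard⟩ : gammaOTD G' ∈ {n | ∃ C : Set V, IsOTDCode G' C ∧ C.ncard = n} :=
      Nat.sInf_mem ⟨_, Set.univ, huniv, rfl⟩
    refine Nat.sInf_le ⟨insert (Sum.inr PUnit.unit) (Sum.inl '' C), ?_, ?_⟩
    · rw [isODCode_sum_bot_iff]
      have hpre : Sum.inl ⁻¹' (insert (Sum.inr PUnit.unit) (Sum.inl '' C) : Set (V ⊕ PUnit)) = C := by
        ext x
        simp
      exact ⟨Set.mem_insert _ _, hpre.symm ▸ hC⟩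
    · rw [ncard_insert_inr_image_inl, hcard]
  · -- The full vertex set is an OD-code of the sum, so its OD-number is attained.
    obtain ⟨D, hD, hcard⟩ : gammaOD (G' ⊕g (⊥ : SimpleGraph PUnit)) ∈
        {n | ∃ C : Set (V ⊕ PUnit), IsODCode (G' ⊕g (⊥ : SimpleGraph PUnit)) C ∧ C.ncard = n} :=
      Nat.sInf_mem ⟨_, Set.univ, (isODCode_sum_bot_iff _ _).mpr ⟨trivial, huniv⟩, rfl⟩
    obtain ⟨hmem, hC⟩ := (isODCode_sum_bot_iff _ _).mp hD
    have hDeq : D = insert (Sum.inr PUnit.unit) (Sum.inl '' (Sum.inl ⁻¹' D)) := by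
      ext x
      rcases x with x | ⟨⟩ <;> simp [hmem]
    rw [← hcard, hDeq, ncard_insert_inr_image_inl]
    exact Nat.add_le_add_right (Nat.sInf_le
      (show _ ∈ {n | ∃ C : Set V, IsOTDCode G' C ∧ C.ncard = n} from ⟨_, hC, rfl⟩)) 1
end

section
/- Let G be a finite simple graph with no open twins and no isolated vertices. Then γ^OTD(G) − 1 ≤ γ^OD(G) ≤ γ^OTD(G). -/
theorem TotalDominating.dominating {V : Type*} {G : SimpleGraph V} {C : Set V}
    (h : TotalDominating G C) : Dominating G C := fun v =>
  (h v).mono (Set.inter_subset_inter_left _ (Set.subset_insert _ _))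

theorem OpenSeparating.mono {V : Type*} {G : SimpleGraph V} {C D : Set V}
    (h : OpenSeparating G C) (hCD : C ⊆ D) : OpenSeparating G D := by
  intro u v huv he
  apply h u v huv
  rw [← Set.inter_eq_self_of_subset_right hCD, ← Set.inter_assoc, ← Set.inter_assoc, he]

theorem isOTDCode_univ {V : Type*} {G : SimpleGraph V} (htwins : ¬ HasOpenTwins G)
    (hiso : ∀ v : V, (G.neighborSet v).Nonempty) : IsOTDCode G Set.univ :=
  ⟨fun v => by simpa using hiso v, fun u v huv he => htwins ⟨u, v, huv, by simpa using he⟩⟩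

/-- At most one vertex has no neighbor in an open-separating set, so a single extra vertex makes
the set total-dominating. -/
theorem OpenSeparating.exists_isOTDCode {V : Type*} {G : SimpleGraph V}
    (hiso : ∀ v : V, (G.neighborSet v).Nonempty) {C : Set V} (hC : OpenSeparating G C) :
    ∃ D : Set V, IsOTDCode G D ∧ D.ncard ≤ C.ncard + 1 := by
  by_cases h : TotalDominating G C
  · exact ⟨C, ⟨h, hC⟩, Nat.le_succ _⟩
  · obtain ⟨v, hv⟩ := not_forall.mp h
    rw [Set.not_nonempty_iff_eq_empty] at hv
    obtain ⟨w, hw⟩ := hiso v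
    refine ⟨insert w C, ⟨fun u => ?_, hC.mono (Set.subset_insert w C)⟩, Set.ncard_insert_le w C⟩
    by_cases huv : u = v
    · subst huv
      exact ⟨w, hw, Set.mem_insert w C⟩
    · have hu : (G.neighborSet u ∩ C).Nonempty := by
        rw [Set.nonempty_iff_ne_empty, ← hv]
        exact hC u v huv
      exact hu.mono (Set.inter_subset_inter_right _ (Set.subset_insert w C))

/-- For an open twin-free graph without isolated vertices,
`γ^OTD(G) - 1 ≤ γ^OD(G) ≤ γ^OTD(G)`. -/
theorem gammaOD_le_gammaOTD {V : Type*} [Fintype V] (G : SimpleGraph V)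
    (htwins : ¬ HasOpenTwins G)
    (hiso : ∀ v : V, (G.neighborSet v).Nonempty) :
    gammaOTD G - 1 ≤ gammaOD G ∧ gammaOD G ≤ gammaOTD G := by
  obtain ⟨D, hD, hDcard⟩ : gammaOTD G ∈ {n | ∃ C : Set V, IsOTDCode G C ∧ C.ncard = n} :=
    Nat.sInf_mem ⟨_, Set.univ, isOTDCode_univ htwins hiso, rfl⟩
  have hDOD : IsODCode G D := ⟨hD.1.dominating, hD.2⟩
  obtain ⟨C, hC, hCcard⟩ : gammaOD G ∈ {n | ∃ C : Set V, IsODCode G C ∧ C.ncard = n} :=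
    Nat.sInf_mem ⟨_, D, hDOD, rfl⟩
  constructor
  · obtain ⟨E, hE, hEcard⟩ := hC.2.exists_isOTDCode hiso
    have hle : gammaOTD G ≤ E.ncard := Nat.sInf_le ⟨E, hE, rfl⟩
    omega
  · exact Nat.sInf_le ⟨D, hDOD, hDcard⟩
end

section
/- For the complete graph K_n on n ≥ 2 vertices, γ^OD(K_n) = n − 1. -/
theorem dominating_top_iff {V : Type*} [Nonempty V] (C : Set V) :
    Dominating (⊤ : SimpleGraph V) C ↔ C.Nonempty := by
  constructor
  · intro h
    exact (h (Classical.arbitrary V)).mono Set.inter_subset_right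
  · rintro ⟨c, hc⟩ v
    refine ⟨c, ?_, hc⟩
    by_cases hcv : c = v
    · exact Or.inl hcv
    · exact Or.inr (Ne.symm hcv)

theorem openSeparating_top_iff {V : Type*} (C : Set V) :
    OpenSeparating (⊤ : SimpleGraph V) C ↔ Cᶜ.Subsingleton := by
  have trace : ∀ u, (⊤ : SimpleGraph V).neighborSet u ∩ C = C \ {u} := by
    intro u
    ext x
    simp [and_comm, eq_comm]
  constructor
  · intro h u hu v hv
    by_contra huv
    apply h u v huv
    rw [trace, trace, Set.sdiff_singleton_eq_self hu, Set.sdiff_singleton_eq_self hv]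
  · intro h u v huv heq
    rw [trace, trace] at heq
    apply huv
    by_cases hu : u ∈ C
    -- If `u ≠ v`, then `u ∈ C` would lie in the trace of `v` but not in its own.
    · by_contra hne
      have : u ∈ C \ {u} := heq ▸ (⟨hu, hne⟩ : u ∈ C \ {v})
      exact this.2 rfl
    · by_cases hv : v ∈ C
      · by_contra hne
        have : v ∈ C \ {v} := heq ▸ (⟨hv, Ne.symm hne⟩ : v ∈ C \ {u})
        exact this.2 rfl
      · exact h hu hv

/-- For the complete graph on `n ≥ 2` vertices, `γ^OD(K_n) = n - 1`. -/
theorem gammaOD_completeGraph (n : ℕ) (hn : 2 ≤ n) :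
    gammaOD (⊤ : SimpleGraph (Fin n)) = n - 1 := by
  have : NeZero n := ⟨by omega⟩
  have hcard : ∀ C : Set (Fin n), C.ncard + Cᶜ.ncard = n := fun C => by
    simpa using Set.ncard_add_ncard_compl C
  unfold gammaOD
  refine IsLeast.csInf_eq ⟨⟨{0}ᶜ, ⟨?_, ?_⟩, ?_⟩, ?_⟩
  · rw [dominating_top_iff]
    refine ⟨⟨1, by omega⟩, ?_⟩
    simp [Fin.ext_iff]
  · rw [openSeparating_top_iff, compl_compl]
    exact Set.subsingleton_singleton
  · have := hcard {0}
    rw [Set.ncard_singleton] at this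
    omega
  · rintro _ ⟨C, hC, rfl⟩
    have h1 : Cᶜ.ncard ≤ 1 :=
      Set.ncard_le_one_iff_subsingleton.mpr ((openSeparating_top_iff C).mp hC.2)
    have := hcard C
    omega
end

section
/- Let T_k = (C ∪ S, E) be a thin sun with k ≥ 4 that has no open C-twins. Then C is a minimum OD-code of T_k and γ^OD(T_k) = |C| = k. -/
/-- A dominating set meets each of the `k` disjoint pairs `N[sᵢ] = {sᵢ, cᵢ}`. -/
lemma le_ncard_of_dominating {k : ℕ} {G : SimpleGraph (Fin k ⊕ Fin k)}
    (hstable : ∀ i j : Fin k, ¬ G.Adj (Sum.inr i) (Sum.inr j))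
    (hpendant : ∀ i j : Fin k, G.Adj (Sum.inr i) (Sum.inl j) ↔ i = j)
    {D : Set (Fin k ⊕ Fin k)} (hD : Dominating G D) : k ≤ D.ncard := by
  -- Forgetting whether a vertex lies in `C` or in `S` maps `D` onto all indices.
  have himg : Sum.elim id id '' D = (Set.univ : Set (Fin k)) := by
    refine Set.eq_univ_of_forall fun i => ?_
    obtain ⟨v, hv, hvD⟩ := hD (Sum.inr i)
    refine ⟨v, hvD, ?_⟩
    rcases hv with rfl | hv
    · rfl
    · rcases v with j | j
      · exact ((hpendant i j).1 hv).symm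
      · exact absurd hv (hstable i j)
  calc k = (Sum.elim id id '' D : Set (Fin k)).ncard := by simp [himg, Set.ncard_univ]
    _ ≤ D.ncard := Set.ncard_image_le D.toFinite

/-- The cyclic successor and predecessor of `i` are distinct neighbours of `cᵢ`, so the neighbours
of `cᵢ` in `C` are not all equal to one vertex. -/
lemma exists_adj_ne {k : ℕ} (hk : 3 ≤ k) {G : SimpleGraph (Fin k ⊕ Fin k)}
    (hcycle : ∀ i : Fin k,
      G.Adj (Sum.inl i) (Sum.inl ⟨((i : ℕ) + 1) % k, Nat.mod_lt _ (by omega)⟩))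
    (i j : Fin k) : ∃ l : Fin k, l ≠ j ∧ G.Adj (Sum.inl i) (Sum.inl l) := by
  obtain ⟨i, hi⟩ := i
  by_cases h : (⟨(i + 1) % k, Nat.mod_lt _ (by omega)⟩ : Fin k) = j
  · -- The successor is `j`, so the predecessor is used instead.
    obtain ⟨p, hp, hpi⟩ : ∃ p, p < k ∧ (p + 1) % k = i := by
      rcases Nat.eq_zero_or_pos i with rfl | h0
      · exact ⟨k - 1, by omega, by rw [Nat.sub_add_cancel (by omega), Nat.mod_self]⟩
      · exact ⟨i - 1, by omega, by rw [Nat.sub_add_cancel h0, Nat.mod_eq_of_lt hi]⟩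
    have hadj := hcycle ⟨p, hp⟩
    simp only [hpi] at hadj
    refine ⟨⟨p, hp⟩, ?_, hadj.symm⟩
    rintro rfl
    have h' : (i + 1) % k = p := congrArg Fin.val h
    -- Predecessor and successor of `i` agree only when `k` divides `2`.
    have h1 : i + 1 < k ∨ i + 1 = k := by omega
    have h2 : p + 1 < k ∨ p + 1 = k := by omega
    rcases h1 with h1 | h1 <;> rcases h2 with h2 | h2 <;>
      simp only [h1, h2, Nat.mod_eq_of_lt, Nat.mod_self] at h' hpi <;> omega
  · exact ⟨_, h, hcycle ⟨i, hi⟩⟩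

/-- For a thin sun `T_k` (`k ≥ 4`) without open `C`-twins, the cycle set `C`
(here `Set.range Sum.inl`) is a minimum OD-code, and `γ^OD(T_k) = |C| = k`.
The thin sun is any graph `G` on `Fin k ⊕ Fin k` where `Sum.inl` indexes `C` (containing the
cycle `c₁ … c_k` in this cyclic order, possibly with chords), `Sum.inr` indexes the stable set
`S`, and `sᵢ ~ cⱼ` iff `i = j`. -/
theorem thinSun_cycle_is_min_ODCode (k : ℕ) (hk : 4 ≤ k) (G : SimpleGraph (Fin k ⊕ Fin k))
    (hstable : ∀ i j : Fin k, ¬ G.Adj (Sum.inr i) (Sum.inr j))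
    (hpendant : ∀ i j : Fin k, G.Adj (Sum.inr i) (Sum.inl j) ↔ i = j)
    (hcycle : ∀ i : Fin k,
      G.Adj (Sum.inl i) (Sum.inl ⟨((i : ℕ) + 1) % k, Nat.mod_lt _ (by omega)⟩))
    (hnoCtwins : ∀ i j : Fin k, i ≠ j → ¬ G.Adj (Sum.inl i) (Sum.inl j) →
      G.neighborSet (Sum.inl i) ∩ Set.range Sum.inl ≠
        G.neighborSet (Sum.inl j) ∩ Set.range Sum.inl) :
    IsODCode G (Set.range Sum.inl) ∧
    (Set.range (Sum.inl : Fin k → Fin k ⊕ Fin k)).ncard = k ∧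
    gammaOD G = k := by
  have hcode : IsODCode G (Set.range Sum.inl) := by
    refine ⟨?_, ?_⟩
    · rintro (i | i)
      · exact ⟨Sum.inl i, Or.inl rfl, i, rfl⟩
      · exact ⟨Sum.inl i, Or.inr ((hpendant i i).2 rfl), i, rfl⟩
    · -- Equality of traces on `C`, read off at a vertex of `C`.
      have key : ∀ u v, G.neighborSet u ∩ Set.range Sum.inl =
          G.neighborSet v ∩ Set.range Sum.inl →
          ∀ l : Fin k, G.Adj u (Sum.inl l) ↔ G.Adj v (Sum.inl l) := by
        intro u v h l
        simpa using Set.ext_iff.1 h (Sum.inl l)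
      rintro (i | i) (j | j) hne h
      · by_cases hadj : G.Adj (Sum.inl i) (Sum.inl j)
        · exact G.loopless.irrefl _ ((key _ _ h j).1 hadj)
        · exact hnoCtwins i j (fun e => hne (congrArg _ e)) hadj h
      · obtain ⟨l, hl, hadj⟩ := exists_adj_ne (by omega) hcycle i j
        exact hl ((hpendant j l).1 ((key _ _ h l).1 hadj)).symm
      · obtain ⟨l, hl, hadj⟩ := exists_adj_ne (by omega) hcycle j i
        exact hl ((hpendant i l).1 ((key _ _ h l).2 hadj)).symm
      · exact hne (congrArg _ ((hpendant j i).1 ((key _ _ h i).1 ((hpendant i i).2 rfl))).symm)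
  have hcard : (Set.range (Sum.inl : Fin k → Fin k ⊕ Fin k)).ncard = k := by
    rw [← Set.image_univ, Set.ncard_image_of_injective _ Sum.inl_injective]
    simp [Set.ncard_univ]
  refine ⟨hcode, hcard, le_antisymm (Nat.sInf_le ⟨_, hcode, hcard⟩) ?_⟩
  -- The set of sizes is nonempty, so its infimum is attained by an actual OD-code.
  obtain ⟨D, hD, hDn⟩ := Nat.sInf_mem
    (s := {n | ∃ C : Set (Fin k ⊕ Fin k), IsODCode G C ∧ C.ncard = n}) ⟨k, _, hcode, hcard⟩
  exact (le_ncard_of_dominating hstable hpendant hD.1).trans hDn.le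
end
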